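/- arXiv:2509.19679 — 3 statements merged into one kernel-verified Lean document; each statement's English description precedes it below -/
import Mathlib

section
/- There exists ε > 0 such that for every w ∈ ℝ^m with w_k ≥ −ε for all k, the matrix A(w) := Fᵀ Γ^{-1/2} Diag(w) Γ^{-1/2} F + C0⁻¹ is positive definite (in particular invertible), so that the A-optimal objective J(w) := trace(A(w)⁻¹) is well-defined for all nonnegative and sufficiently small negative values of w. -/
open Matrix

/-- The posterior precision matrix `A(w) = Fᵀ Γ^{-1/2} Diag(w) Γ^{-1/2} F + C0⁻¹`,
where `Γih` plays the role of `Γ^{-1/2}`. -/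
noncomputable def postPrec {m n : ℕ} (F : Matrix (Fin m) (Fin n) ℝ)
    (Γih : Matrix (Fin m) (Fin m) ℝ) (C0 : Matrix (Fin n) (Fin n) ℝ)
    (w : Fin m → ℝ) : Matrix (Fin n) (Fin n) ℝ :=
  Fᵀ * Γih * Matrix.diagonal w * Γih * F + C0⁻¹

theorem aux_posDef {n : ℕ} (P S : Matrix (Fin n) (Fin n) ℝ) (hP : P.PosDef)
    (hS : S.IsHermitian) : ∃ ε > (0 : ℝ), (P - ε • S).PosDef := by
  have hpos : ∀ x : Fin n → ℝ, x ≠ 0 → 0 < x ⬝ᵥ (P *ᵥ x) := fun x hx => by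
    simpa using hP.dotProduct_mulVec_pos hx
  have hne : ∀ x ∈ Metric.sphere (0 : Fin n → ℝ) 1, x ≠ 0 := fun x hx h => by
    subst h; simp at hx
  obtain ⟨C, hC⟩ := (isCompact_sphere (0 : Fin n → ℝ) 1).exists_bound_of_continuousOn
    (f := fun x => (x ⬝ᵥ (S *ᵥ x)) / (x ⬝ᵥ (P *ᵥ x))) (by
      apply ContinuousOn.div
      · exact Continuous.continuousOn (by fun_prop)
      · exact Continuous.continuousOn (by fun_prop)
      · intro x hx
        exact (hpos x (hne x hx)).ne')
  have hε : (0 : ℝ) < 1 / (|C| + 1) := by positivity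
  have key : ∀ x : Fin n → ℝ, x ≠ 0 → x ⬝ᵥ (S *ᵥ x) ≤ |C| * (x ⬝ᵥ (P *ᵥ x)) := by
    intro x hx
    have hx' : 0 < ‖x‖ := norm_pos_iff.2 hx
    have h := hC (‖x‖⁻¹ • x) (by simp [norm_smul, hx'.ne'])
    have h2 := (le_abs_self _).trans (h.trans (le_abs_self C))
    simp only [mulVec_smul, smul_dotProduct, dotProduct_smul, smul_eq_mul] at h2
    rw [mul_div_mul_left _ _ (inv_pos.2 hx').ne', mul_div_mul_left _ _ (inv_pos.2 hx').ne',
      div_le_iff₀ (hpos x hx)] at h2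
    exact h2
  refine ⟨_, hε, Matrix.PosDef.of_dotProduct_mulVec_pos ?_ ?_⟩
  · refine hP.1.sub ?_
    rw [Matrix.IsHermitian, conjTranspose_smul, hS.eq, star_trivial]
  · intro x hx
    have h1 := key x hx
    have h2 := hpos x hx
    simp only [star_trivial, sub_mulVec, smul_mulVec, dotProduct_sub, dotProduct_smul,
      smul_eq_mul]
    rw [sub_pos, one_div, inv_mul_lt_iff₀ (by positivity)]
    linarith

theorem stmt_1 {m n : ℕ} (F : Matrix (Fin m) (Fin n) ℝ)
    (Γ Γih : Matrix (Fin m) (Fin m) ℝ) (C0 : Matrix (Fin n) (Fin n) ℝ)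
    (hΓ : Γ.PosDef) (hΓdiag : Γ.IsDiag)
    (hΓih : Γih.PosDef) (hΓihdiag : Γih.IsDiag) (hΓihsq : Γih * Γih = Γ⁻¹)
    (hC0 : C0.PosDef) :
    ∃ ε > (0 : ℝ), ∀ w : Fin m → ℝ, (∀ k, -ε ≤ w k) →
      (postPrec F Γih C0 w).PosDef ∧ IsUnit (postPrec F Γih C0 w) := by
  obtain ⟨ε, hε, hA⟩ := aux_posDef C0⁻¹ ((Γih * F)ᴴ * (Γih * F)) hC0.inv
    (isHermitian_conjTranspose_mul_self _)
  refine ⟨ε, hε, fun w hw => ?_⟩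
  have hD : (diagonal (fun k => w k + ε)).PosSemidef :=
    PosSemidef.diagonal (fun k => by have := hw k; simp only [Pi.zero_apply]; linarith)
  have hB := hD.conjTranspose_mul_mul_same (Γih * F)
  have hT : (Γih * F)ᴴ = Fᵀ * Γih := by
    rw [conjTranspose_mul, hΓih.1.eq, conjTranspose_eq_transpose_of_trivial]
  have hdiag : diagonal (fun k => w k + ε) = diagonal w + ε • (1 : Matrix (Fin m) (Fin m) ℝ) := by
    rw [smul_one_eq_diagonal, diagonal_add]
  have hE : postPrec F Γih C0 w = (Γih * F)ᴴ * diagonal (fun k => w k + ε) * (Γih * F)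
      + (C0⁻¹ - ε • ((Γih * F)ᴴ * (Γih * F))) := by
    rw [hdiag, hT, postPrec]
    simp only [Matrix.mul_add, Matrix.add_mul, Matrix.mul_smul, Matrix.smul_mul, Matrix.mul_one,
      Matrix.mul_assoc]
    abel
  have hfin : (postPrec F Γih C0 w).PosDef := by
    rw [hE]
    exact PosDef.posSemidef_add hB hA
  exact ⟨hfin, hfin.isUnit⟩
end

section
/- Low-rank trace formula for the A-optimal objective (objective part of the low-rank lemma): set F̃ := Γ^{-1/2} F C0^{1/2} and suppose F̃ᵀ = Q R exactly, where Q : Matrix (Fin n) (Fin ℓ) ℝ satisfies Qᵀ Q = I_ℓ and R : Matrix (Fin ℓ) (Fin m) ℝ. Set C := Qᵀ C0 Q. Then for every w ∈ ℝ^m with nonnegative entries, J(w) = trace(C0) − trace(C) + trace((R Diag(w) Rᵀ + I_ℓ)⁻¹ C). -/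
open Matrix

/-- The A-optimal objective `J(w) = trace(A(w)⁻¹)`. -/
noncomputable def Jobj {m n : ℕ} (F : Matrix (Fin m) (Fin n) ℝ)
    (Γih : Matrix (Fin m) (Fin m) ℝ) (C0 : Matrix (Fin n) (Fin n) ℝ)
    (w : Fin m → ℝ) : ℝ :=
  Matrix.trace ((postPrec F Γih C0 w)⁻¹)

theorem stmt_9 {m n ℓ : ℕ} (F : Matrix (Fin m) (Fin n) ℝ)
    (Γ Γih : Matrix (Fin m) (Fin m) ℝ) (C0 C0h : Matrix (Fin n) (Fin n) ℝ)
    (hΓ : Γ.PosDef) (hΓdiag : Γ.IsDiag)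
    (hΓih : Γih.PosDef) (hΓihdiag : Γih.IsDiag) (hΓihsq : Γih * Γih = Γ⁻¹)
    (hC0 : C0.PosDef) (hC0h : C0h.PosDef) (hC0hsq : C0h * C0h = C0)
    (Ftilde : Matrix (Fin m) (Fin n) ℝ) (hFtilde : Ftilde = Γih * F * C0h)
    (Q : Matrix (Fin n) (Fin ℓ) ℝ) (R : Matrix (Fin ℓ) (Fin m) ℝ)
    (hQR : Ftildeᵀ = Q * R) (hQ : Qᵀ * Q = 1)
    (C : Matrix (Fin ℓ) (Fin ℓ) ℝ) (hC : C = Qᵀ * C0 * Q)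
    (w : Fin m → ℝ) (hw : ∀ k, 0 ≤ w k) :
    Jobj F Γih C0 w =
      Matrix.trace C0 - Matrix.trace C +
        Matrix.trace ((R * Matrix.diagonal w * Rᵀ + 1)⁻¹ * C) := by
  have hST : C0hᵀ = C0h := by
    have := hC0h.isHermitian.eq
    rwa [conjTranspose_eq_transpose_of_trivial] at this
  have hGT : Γihᵀ = Γih := by
    have := hΓih.isHermitian.eq
    rwa [conjTranspose_eq_transpose_of_trivial] at this
  have h1 : C0h * (Fᵀ * Γih) = Q * R := by
    rw [← hQR, hFtilde, transpose_mul, transpose_mul, hST, hGT]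
  have h2 : Γih * (F * C0h) = Rᵀ * Qᵀ := by
    rw [← transpose_mul, ← hQR, transpose_transpose, hFtilde, Matrix.mul_assoc]
  have hSu : IsUnit C0h.det := (Matrix.isUnit_iff_isUnit_det _).mp hC0h.isUnit
  have h3 : C0h * C0⁻¹ * C0h = 1 := by
    rw [← hC0hsq, Matrix.mul_inv_rev, ← Matrix.mul_assoc, Matrix.mul_nonsing_inv _ hSu,
      Matrix.one_mul, Matrix.nonsing_inv_mul _ hSu]
  have hM : (R * Matrix.diagonal w * Rᵀ).PosSemidef := by
    have hd : (Matrix.diagonal w).PosSemidef := Matrix.PosSemidef.diagonal hw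
    have := hd.mul_mul_conjTranspose_same R
    rwa [conjTranspose_eq_transpose_of_trivial] at this
  have hMu : (R * Matrix.diagonal w * Rᵀ + 1).PosDef :=
    Matrix.PosDef.posSemidef_add hM Matrix.PosDef.one
  have hK := Matrix.mul_nonsing_inv _ ((Matrix.isUnit_iff_isUnit_det _).mp hMu.isUnit)
  have hA : C0h * postPrec F Γih C0 w * C0h
      = Q * (R * Matrix.diagonal w * Rᵀ) * Qᵀ + 1 := by
    have : C0h * postPrec F Γih C0 w * C0h
        = (C0h * (Fᵀ * Γih)) * Matrix.diagonal w * (Γih * (F * C0h)) + C0h * C0⁻¹ * C0h := by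
      simp only [postPrec, Matrix.mul_add, Matrix.add_mul, Matrix.mul_assoc]
    rw [this, h1, h2, h3]
    simp only [Matrix.mul_assoc]
  generalize R * Matrix.diagonal w * Rᵀ = M at *
  generalize (M + 1)⁻¹ = K at *
  have hX : (Q * M * Qᵀ + 1) * (1 - Q * Qᵀ + Q * K * Qᵀ) = 1 := by
    have e1 : Q * M * Qᵀ * (Q * Qᵀ) = Q * M * Qᵀ := by
      rw [Matrix.mul_assoc (Q * M), ← Matrix.mul_assoc Qᵀ, hQ, Matrix.one_mul]
    have e2 : Q * M * Qᵀ * (Q * K * Qᵀ) = Q * (M * K) * Qᵀ := by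
      rw [Matrix.mul_assoc (Q * M), ← Matrix.mul_assoc Qᵀ, ← Matrix.mul_assoc Qᵀ, hQ,
        Matrix.one_mul]
      simp only [Matrix.mul_assoc]
    have e3 : Q * (M * K) * Qᵀ + Q * K * Qᵀ = Q * Qᵀ := by
      rw [← Matrix.add_mul, ← Matrix.mul_add]
      have : M * K + K = 1 := by rw [← hK, Matrix.add_mul, Matrix.one_mul]
      rw [this, Matrix.mul_one]
    rw [Matrix.add_mul, Matrix.mul_add, Matrix.mul_sub, e1, e2, Matrix.mul_one, Matrix.one_mul,
      ← e3]
    abel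
  have hinv : (postPrec F Γih C0 w)⁻¹ = C0h * (1 - Q * Qᵀ + Q * K * Qᵀ) * C0h := by
    apply Matrix.inv_eq_right_inv
    rw [← hA, Matrix.mul_assoc, Matrix.mul_assoc, mul_eq_one_comm] at hX
    simpa only [Matrix.mul_assoc] using hX
  rw [Jobj, hinv, Matrix.trace_mul_comm, ← Matrix.mul_assoc, hC0hsq, Matrix.mul_add,
    Matrix.mul_sub, Matrix.trace_add, Matrix.trace_sub, Matrix.mul_one, hC]
  congr 1
  · congr 1
    rw [← Matrix.mul_assoc, Matrix.trace_mul_comm, Matrix.mul_assoc]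
  · rw [← Matrix.mul_assoc, Matrix.trace_mul_comm, ← Matrix.mul_assoc, ← Matrix.mul_assoc,
      Matrix.trace_mul_comm]
end

section
/- Low-rank gradient formula (gradient part of the low-rank lemma): let R : Matrix (Fin ℓ) (Fin m) ℝ, let C : Matrix (Fin ℓ) (Fin ℓ) ℝ be symmetric positive semidefinite with positive semidefinite square root C^{1/2}, and let w ∈ ℝ^m have nonnegative entries. Then the function G(w) := trace((R Diag(w) Rᵀ + I_ℓ)⁻¹ C) is differentiable at w and its partial derivative with respect to w_k equals −‖C^{1/2} (R Diag(w) Rᵀ + I_ℓ)⁻¹ r_k‖², where r_k ∈ ℝ^ℓ is the k-th column of R; in particular every partial derivative of G is nonpositive. -/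
open Matrix

/-- The low-rank objective `G(w) = trace((R Diag(w) Rᵀ + I)⁻¹ C)`. -/
noncomputable def Gobj {ℓ m : ℕ} (R : Matrix (Fin ℓ) (Fin m) ℝ)
    (C : Matrix (Fin ℓ) (Fin ℓ) ℝ) (w : Fin m → ℝ) : ℝ :=
  Matrix.trace ((R * Matrix.diagonal w * Rᵀ + 1)⁻¹ * C)

/-- Euclidean norm of a vector in `Fin ℓ → ℝ`. -/
noncomputable def euclNorm {ℓ : ℕ} (v : Fin ℓ → ℝ) : ℝ :=
  ‖(EuclideanSpace.equiv (Fin ℓ) ℝ).symm v‖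

section aux
attribute [local instance] Matrix.linftyOpNormedRing Matrix.linftyOpNormedAlgebra

theorem aux_isUnit {ℓ m : ℕ} (R : Matrix (Fin ℓ) (Fin m) ℝ)
    (w : Fin m → ℝ) (hw : ∀ k, 0 ≤ w k) :
    (R * Matrix.diagonal w * Rᵀ + 1).PosDef := by
  have h1 : (R * Matrix.diagonal w * Rᵀ).PosSemidef := by
    have := (Matrix.PosSemidef.diagonal (n := Fin m) (d := w) hw).mul_mul_conjTranspose_same R
    simpa using this
  exact Matrix.PosDef.posSemidef_add h1 Matrix.PosDef.one

theorem aux_deriv {ℓ m : ℕ} (R : Matrix (Fin ℓ) (Fin m) ℝ)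
    (C : Matrix (Fin ℓ) (Fin ℓ) ℝ)
    (w : Fin m → ℝ) (hw : ∀ k, 0 ≤ w k) :
    ∃ L : (Fin m → ℝ) →L[ℝ] ℝ, HasFDerivAt (Gobj R C) L w ∧
      ∀ v, L v = - Matrix.trace ((R * Matrix.diagonal w * Rᵀ + 1)⁻¹ * (R * Matrix.diagonal v * Rᵀ)
        * (R * Matrix.diagonal w * Rᵀ + 1)⁻¹ * C) := by
  let D : (Fin m → ℝ) →ₗ[ℝ] Matrix (Fin ℓ) (Fin ℓ) ℝ :=
    { toFun := fun v => R * Matrix.diagonal v * Rᵀ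
      map_add' := by
        intro x y
        have : Matrix.diagonal (x + y) = Matrix.diagonal x + Matrix.diagonal y :=
          (Matrix.diagonal_add x y).symm
        rw [this, Matrix.mul_add, Matrix.add_mul]
      map_smul' := by
        intro c x
        simp [Matrix.diagonal_smul] }
  let T : Matrix (Fin ℓ) (Fin ℓ) ℝ →ₗ[ℝ] ℝ :=
    { toFun := fun X => Matrix.trace (X * C)
      map_add' := by
        intro x y
        rw [Matrix.add_mul, Matrix.trace_add]
      map_smul' := by
        intro c x
        simp }
  let D' := LinearMap.toContinuousLinearMap D
  let T' := LinearMap.toContinuousLinearMap T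
  obtain ⟨u, hu⟩ := (aux_isUnit R w hw).isUnit
  have h1 : HasFDerivAt (fun v => D' v + 1) D' w := D'.hasFDerivAt.add_const 1
  have h2 := hasFDerivAt_ringInverse (𝕜 := ℝ) u
  have hu' : (u : Matrix (Fin ℓ) (Fin ℓ) ℝ) = D' w + 1 := hu
  rw [hu'] at h2
  have h3 := T'.hasFDerivAt.comp w (HasFDerivAt.comp w h2 h1)
  refine ⟨_, h3.congr_of_eventuallyEq (Filter.Eventually.of_forall ?_), ?_⟩
  · intro v
    simp only [Function.comp, ← Matrix.nonsing_inv_eq_ringInverse]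
    rfl
  · intro v
    have hi : ((u⁻¹ : (Matrix (Fin ℓ) (Fin ℓ) ℝ)ˣ) : Matrix (Fin ℓ) (Fin ℓ) ℝ)
        = (R * Matrix.diagonal w * Rᵀ + 1)⁻¹ := by
      rw [← hu, Matrix.coe_units_inv]
    rw [← hi, ← Matrix.trace_neg, ← Matrix.neg_mul]
    rfl

end aux

theorem aux_trace {ℓ m : ℕ} (R : Matrix (Fin ℓ) (Fin m) ℝ)
    (B H : Matrix (Fin ℓ) (Fin ℓ) ℝ) (hB : Bᵀ = B) (hH : Hᵀ = H) (k : Fin m) :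
    Matrix.trace (B * (R * Matrix.diagonal (Pi.single k (1 : ℝ) : Fin m → ℝ) * Rᵀ) * B * (H * H)) =
      (euclNorm (H.mulVec (B.mulVec (fun i => R i k)))) ^ 2 := by
  have h0 : R * Matrix.diagonal (Pi.single k (1 : ℝ) : Fin m → ℝ) * Rᵀ
      = Matrix.vecMulVec (fun i => R i k) (fun i => R i k) := by
    ext i j
    simp [Matrix.mul_apply, Matrix.vecMulVec_apply, Matrix.diagonal_apply, Pi.single_apply]
  have h1 : (euclNorm (H.mulVec (B.mulVec (fun i => R i k)))) ^ 2
      = (H.mulVec (B.mulVec (fun i => R i k))) ⬝ᵥ (H.mulVec (B.mulVec (fun i => R i k))) := by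
    rw [euclNorm, EuclideanSpace.norm_sq_eq]
    simp only [Real.norm_eq_abs, sq_abs, dotProduct]
    exact Finset.sum_congr rfl fun i _ => sq _
  have h2 : B * Matrix.vecMulVec (fun i => R i k) (fun i => R i k) * B * (H * H)
      = (B * Matrix.vecMulVec (fun i => R i k) (fun i => R i k) * B * H) * H := by
    simp only [Matrix.mul_assoc]
  rw [h0, h1, h2, Matrix.trace_mul_comm, Matrix.mul_vecMulVec, Matrix.vecMulVec_mul,
    Matrix.vecMulVec_mul, Matrix.mul_vecMulVec, Matrix.trace_vecMulVec]
  congr 1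
  rw [← Matrix.mulVec_transpose, ← Matrix.mulVec_transpose, hB, hH]

theorem stmt_10 {ℓ m : ℕ} (R : Matrix (Fin ℓ) (Fin m) ℝ)
    (C Chalf : Matrix (Fin ℓ) (Fin ℓ) ℝ)
    (hC : C.PosSemidef) (hChalf : Chalf.PosSemidef) (hChalfsq : Chalf * Chalf = C)
    (w : Fin m → ℝ) (hw : ∀ k, 0 ≤ w k) :
    DifferentiableAt ℝ (Gobj R C) w ∧
      (∀ k : Fin m,
        fderiv ℝ (Gobj R C) w (Pi.single k 1) =
          -(euclNorm (Chalf.mulVec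
              ((R * Matrix.diagonal w * Rᵀ + 1)⁻¹.mulVec (fun i => R i k))))^2) ∧
      (∀ k : Fin m, fderiv ℝ (Gobj R C) w (Pi.single k 1) ≤ 0) := by
  obtain ⟨L, hL, hLv⟩ := aux_deriv R C w hw
  have hB : ((R * Matrix.diagonal w * Rᵀ + 1)⁻¹)ᵀ = (R * Matrix.diagonal w * Rᵀ + 1)⁻¹ := by
    have := (aux_isUnit R w hw).isHermitian.inv
    simpa [Matrix.IsHermitian] using this
  have hH : Chalfᵀ = Chalf := by
    simpa [Matrix.IsHermitian] using hChalf.isHermitian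
  have key : ∀ k : Fin m,
        fderiv ℝ (Gobj R C) w (Pi.single k 1) =
          -(euclNorm (Chalf.mulVec
              ((R * Matrix.diagonal w * Rᵀ + 1)⁻¹.mulVec (fun i => R i k))))^2 := by
    intro k
    rw [hL.fderiv, hLv, ← hChalfsq, aux_trace R _ Chalf hB hH k]
  refine ⟨hL.differentiableAt, key, fun k => ?_⟩
  rw [key k]
  exact neg_nonpos.mpr (sq_nonneg _)
end
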